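/- Fix θ ∈ ℂ. Let U ⊆ ℂ \ {0, 1} be open and let y : U → ℂ be twice complex differentiable with y(t) ∉ {0, 1, t} for all t ∈ U. Suppose y satisfies the algebraic equation t/y(t)² − (t−1)/(y(t)−1)² + t(t−1)/(y(t)−t)² = 0 identically on U, and that at every t ∈ U the partial derivative in y of the left-hand side, −2t/y³ + 2(t−1)/(y−1)³ − 2t(t−1)/(y−t)³, is nonzero. Then y solves the sixth Painlevé equation PVI(α,β,γ,δ) on U with θ-tuple (θ₀, θ₁, θ_t, θ_∞) = (θ, θ, θ, 1/2), i.e. with α = 1/8, β = −θ²/2, γ = θ²/2, δ = (1 − θ²)/2. -/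

import Mathlib

/-!
In the Painlevé equation `θ` only enters through a multiple of `θ²` whose cofactor is the left-hand
side of the algebraic equation, so it suffices to treat `θ = 0`. Put `s = t (y - 1) / (t - y)`. The
algebraic equation becomes `t (2 s + 1) = s³ (s + 2)`, which makes the curve rational:
`t = s³ (s + 2) / (2 s + 1)` and `y = s² (s + 2) / (s² + s + 1)`. As a function of `t`, the
parameter `s` solves the autonomous equation `ds/dt = (2 s + 1)² / (6 s² (s + 1)²)`, so the first
and second derivatives of `y` are explicit rational functions of `s`, and the Painlevé equation is
an identity between rational functions of `s`.
-/

section Curve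

variable {𝕜 : Type*} [Field 𝕜]

/-- The right-hand side of the sixth Painlevé equation, as a function of its parameters, the
independent variable `t`, the value `y` and the slope `p` of `y`. -/
def painleveVI (α β γ δ t y p : 𝕜) : 𝕜 :=
  (1 / 2) * (1 / y + 1 / (y - 1) + 1 / (y - t)) * p ^ 2
    - (1 / t + 1 / (t - 1) + 1 / (y - t)) * p
    + (y * (y - 1) * (y - t) / (t ^ 2 * (t - 1) ^ 2)) *
      (α + β * t / y ^ 2 + γ * (t - 1) / (y - 1) ^ 2 + δ * t * (t - 1) / (y - t) ^ 2)

/-- The point `(t, y)` lies on the algebraic curve where the coefficient of `θ²` in the sixth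
Painlevé equation vanishes, away from the singular loci of that equation. -/
structure OnThetaCurve (t y : 𝕜) : Prop where
  t_ne_zero : t ≠ 0
  t_ne_one : t ≠ 1
  y_ne_zero : y ≠ 0
  y_ne_one : y ≠ 1
  y_ne_t : y ≠ t
  eq_zero : t / y ^ 2 - (t - 1) / (y - 1) ^ 2 + t * (t - 1) / (y - t) ^ 2 = 0

theorem OnThetaCurve.painleveVI_eq {t y : 𝕜} (h : OnThetaCurve t y) (θ α p : 𝕜) :
    painleveVI α (-(θ ^ 2) / 2) (θ ^ 2 / 2) ((1 - θ ^ 2) / 2) t y p =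
      painleveVI α 0 0 (1 / 2) t y p := by
  unfold painleveVI
  linear_combination
    (y * (y - 1) * (y - t) / (t ^ 2 * (t - 1) ^ 2)) * (-(θ ^ 2) / 2) * h.eq_zero

/-- The rational parameter of the curve `OnThetaCurve`, as a function of the point `(t, y)`. -/
def curveParam (t y : 𝕜) : 𝕜 := t * (y - 1) / (t - y)

/-- The coordinate `t` on the curve `OnThetaCurve` in terms of the parameter. -/
def curveT (s : 𝕜) : 𝕜 := s ^ 3 * (s + 2) / (2 * s + 1)

/-- The coordinate `y` on the curve `OnThetaCurve` in terms of the parameter. -/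
def curveY (s : 𝕜) : 𝕜 := s ^ 2 * (s + 2) / (s ^ 2 + s + 1)

/-- The derivative of the parameter with respect to `t`, the reciprocal of the derivative of
`curveT`. -/
def paramVelocity (s : 𝕜) : 𝕜 := (2 * s + 1) ^ 2 / (6 * s ^ 2 * (s + 1) ^ 2)

/-- The first derivative `dy/dt` along the curve `OnThetaCurve` in terms of the parameter. -/
def curveSlope (s : 𝕜) : 𝕜 :=
  (s ^ 2 + s + 4) * (2 * s + 1) ^ 2 / (6 * s * (s + 1) * (s ^ 2 + s + 1) ^ 2)

/-- The second derivative `d²y/dt²` along the curve `OnThetaCurve` in terms of the parameter. -/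
def curveSecondDeriv (s : 𝕜) : 𝕜 :=
  -(2 * (s ^ 2 + s) ^ 3 + 15 * (s ^ 2 + s) ^ 2 + 6 * (s ^ 2 + s) + 2) * (2 * s + 1) ^ 3 /
    (18 * (s * (s + 1)) ^ 4 * (s ^ 2 + s + 1) ^ 3)

/-- The values of the parameter at which `t`, `y` and the derivatives of `y` are finite and
`(t, y)` avoids the singular loci of the sixth Painlevé equation. -/
structure IsRegularParam (s : 𝕜) : Prop where
  ne_zero : s ≠ 0
  add_one_ne_zero : s + 1 ≠ 0
  sub_one_ne_zero : s - 1 ≠ 0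
  add_two_ne_zero : s + 2 ≠ 0
  two_mul_add_one_ne_zero : 2 * s + 1 ≠ 0
  sq_add_self_add_one_ne_zero : s ^ 2 + s + 1 ≠ 0

section Param

variable {t y : 𝕜}

theorem curveParam_add_one (hyt : y ≠ t) : curveParam t y + 1 = y * (t - 1) / (t - y) := by
  have : t - y ≠ 0 := sub_ne_zero.mpr hyt.symm
  unfold curveParam
  field_simp
  ring

theorem curveParam_add_self (hyt : y ≠ t) : curveParam t y + t = t * (t - 1) / (t - y) := by
  have : t - y ≠ 0 := sub_ne_zero.mpr hyt.symm
  unfold curveParam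
  field_simp
  ring

theorem mul_curveParam_add_self (hyt : y ≠ t) :
    y * (curveParam t y + t) = t * (curveParam t y + 1) := by
  rw [curveParam_add_self hyt, curveParam_add_one hyt]
  ring

namespace OnThetaCurve

theorem t_sub_one_ne_zero (h : OnThetaCurve t y) : t - 1 ≠ 0 := sub_ne_zero.mpr h.t_ne_one

theorem y_sub_one_ne_zero (h : OnThetaCurve t y) : y - 1 ≠ 0 := sub_ne_zero.mpr h.y_ne_one

theorem t_sub_y_ne_zero (h : OnThetaCurve t y) : t - y ≠ 0 := sub_ne_zero.mpr h.y_ne_t.symm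

theorem quartic_curveParam (h : OnThetaCurve t y) :
    t * (2 * curveParam t y + 1) = curveParam t y ^ 3 * (curveParam t y + 2) := by
  have hy := h.y_ne_zero
  have hy1 := h.y_sub_one_ne_zero
  have hty := h.t_sub_y_ne_zero
  have hyt : y - t ≠ 0 := sub_ne_zero.mpr h.y_ne_t
  have quartic_eq : curveParam t y ^ 3 * (curveParam t y + 2) - t * (2 * curveParam t y + 1) =
      t * (t - 1) * y ^ 2 * (y - 1) ^ 2 / (t - y) ^ 2 *
        (t / y ^ 2 - (t - 1) / (y - 1) ^ 2 + t * (t - 1) / (y - t) ^ 2) := by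
    unfold curveParam
    field_simp
    ring
  rw [h.eq_zero, mul_zero, sub_eq_zero] at quartic_eq
  exact quartic_eq.symm

theorem isRegularParam [CharZero 𝕜] (h : OnThetaCurve t y) : IsRegularParam (curveParam t y) := by
  have hquartic := h.quartic_curveParam
  have hs : curveParam t y ≠ 0 :=
    div_ne_zero (mul_ne_zero h.t_ne_zero h.y_sub_one_ne_zero) h.t_sub_y_ne_zero
  have hs1 : curveParam t y + 1 ≠ 0 := by
    rw [curveParam_add_one h.y_ne_t]
    exact div_ne_zero (mul_ne_zero h.y_ne_zero h.t_sub_one_ne_zero) h.t_sub_y_ne_zero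
  have hst : curveParam t y + t ≠ 0 := by
    rw [curveParam_add_self h.y_ne_t]
    exact div_ne_zero (mul_ne_zero h.t_ne_zero h.t_sub_one_ne_zero) h.t_sub_y_ne_zero
  generalize curveParam t y = s at *
  have hden : 2 * s + 1 ≠ 0 := by
    intro h0
    have hs2 : s + 2 = 0 := by simpa [h0, hs] using hquartic.symm
    exact three_ne_zero (α := 𝕜) (by linear_combination 2 * hs2 - h0)
  have t_sub_one_eq : (t - 1) * (2 * s + 1) = (s - 1) * (s + 1) ^ 3 := by
    linear_combination hquartic
  have add_t_eq : (s + t) * (2 * s + 1) = s * (s + 1) * (s ^ 2 + s + 1) := by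
    linear_combination hquartic
  exact
    { ne_zero := hs
      add_one_ne_zero := hs1
      sub_one_ne_zero := left_ne_zero_of_mul
        (t_sub_one_eq ▸ mul_ne_zero h.t_sub_one_ne_zero hden)
      add_two_ne_zero := right_ne_zero_of_mul (hquartic ▸ mul_ne_zero h.t_ne_zero hden)
      two_mul_add_one_ne_zero := hden
      sq_add_self_add_one_ne_zero := right_ne_zero_of_mul (add_t_eq ▸ mul_ne_zero hst hden) }

theorem curveT_curveParam [CharZero 𝕜] (h : OnThetaCurve t y) : curveT (curveParam t y) = t := by
  rw [curveT, ← h.quartic_curveParam,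
    mul_div_cancel_right₀ _ h.isRegularParam.two_mul_add_one_ne_zero]

theorem curveY_curveParam [CharZero 𝕜] (h : OnThetaCurve t y) : curveY (curveParam t y) = y := by
  have hs := h.isRegularParam
  have hy := mul_curveParam_add_self h.y_ne_t
  have hquartic := h.quartic_curveParam
  generalize curveParam t y = s at *
  rw [curveY, div_eq_iff hs.sq_add_self_add_one_ne_zero]
  apply mul_left_cancel₀ (mul_ne_zero hs.ne_zero hs.add_one_ne_zero)
  linear_combination -(2 * s + 1) * hy + (y - s - 1) * hquartic

end OnThetaCurve

end Param

section Identity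

variable {s : 𝕜}

theorem curveY_sub_one (hs : s ^ 2 + s + 1 ≠ 0) :
    curveY s - 1 = (s + 1) ^ 2 * (s - 1) / (s ^ 2 + s + 1) := by
  rw [curveY, div_sub_one hs]
  ring

theorem curveT_sub_one (hs : 2 * s + 1 ≠ 0) :
    curveT s - 1 = (s - 1) * (s + 1) ^ 3 / (2 * s + 1) := by
  rw [curveT, div_sub_one hs]
  ring

theorem curveY_sub_curveT (hs : 2 * s + 1 ≠ 0) (hs' : s ^ 2 + s + 1 ≠ 0) :
    curveY s - curveT s =
      -(s ^ 2 * (s + 2) * (s + 1) ^ 2 * (s - 1)) / ((s ^ 2 + s + 1) * (2 * s + 1)) := by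
  rw [curveY, curveT, div_sub_div _ _ hs' hs]
  ring

theorem painleveVI_curve [CharZero 𝕜] (hs : IsRegularParam s) :
    painleveVI (1 / 8) 0 0 (1 / 2) (curveT s) (curveY s) (curveSlope s) = curveSecondDeriv s := by
  have ⟨h_zero, h_add_one, h_sub_one, h_add_two, hden, hden'⟩ := hs
  rw [painleveVI, curveY_sub_curveT hden hden', curveY_sub_one hden', curveT_sub_one hden, curveY,
    curveT, curveSlope, curveSecondDeriv]
  field_simp
  ring

end Identity

end Curve

section Derivatives

variable {𝕜 : Type*} [NontriviallyNormedField 𝕜]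

open Topology

theorem hasDerivAt_curveY {s : 𝕜} (hs : s ^ 2 + s + 1 ≠ 0) :
    HasDerivAt curveY (s * (s + 1) * (s ^ 2 + s + 4) / (s ^ 2 + s + 1) ^ 2) s := by
  have hid := hasDerivAt_id' s
  have hden := ((hid.fun_pow 2).add hid).add_const 1
  refine (((hid.fun_pow 2).mul (hid.add_const 2)).div hden hs).congr_deriv ?_
  simp only [Pi.add_apply, Pi.mul_apply]
  push_cast
  ring

variable [CharZero 𝕜]

theorem hasDerivAt_curveSlope {s : 𝕜} (h_zero : s ≠ 0) (h_add_one : s + 1 ≠ 0)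
    (hden : s ^ 2 + s + 1 ≠ 0) :
    HasDerivAt curveSlope
      (-(2 * (s ^ 2 + s) ^ 3 + 15 * (s ^ 2 + s) ^ 2 + 6 * (s ^ 2 + s) + 2) * (2 * s + 1) /
        (3 * (s * (s + 1)) ^ 2 * (s ^ 2 + s + 1) ^ 3)) s := by
  have hid := hasDerivAt_id' s
  have hnum := (((hid.fun_pow 2).add hid).add_const 4).mul
    (((hid.const_mul 2).add_const 1).fun_pow 2)
  have hdenom := ((hid.const_mul 6).mul (hid.add_const 1)).mul
    ((((hid.fun_pow 2).add hid).add_const 1).fun_pow 2)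
  refine (hnum.div hdenom (by simp [h_zero, h_add_one, hden])).congr_deriv ?_
  simp only [Pi.add_apply, Pi.mul_apply]
  push_cast
  field_simp
  ring

/-- Implicit differentiation of `curveT (s t) = t`, with denominators cleared. -/
theorem hasDerivAt_of_quartic {s : 𝕜 → 𝕜} {t : 𝕜} (hdiff : DifferentiableAt 𝕜 s t)
    (h_zero : s t ≠ 0) (h_add_one : s t + 1 ≠ 0)
    (hquartic : ∀ᶠ x in 𝓝 t, x * (2 * s x + 1) = s x ^ 3 * (s x + 2)) :
    HasDerivAt s (paramVelocity (s t)) t := by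
  have hderiv := hdiff.hasDerivAt
  have hleft := (hasDerivAt_id' t).mul ((hderiv.const_mul 2).add_const 1)
  have hright := (hderiv.fun_pow 3).mul (hderiv.add_const 2)
  have implicit := hleft.unique (hright.congr_of_eventuallyEq hquartic)
  have ht := hquartic.self_of_nhds
  push_cast at implicit
  refine hderiv.congr_deriv ?_
  rw [paramVelocity, eq_div_iff (by simp [h_zero, h_add_one])]
  linear_combination -(2 * s t + 1) * implicit + 2 * deriv s t * ht

theorem hasDerivAt_curveY_comp {s : 𝕜 → 𝕜} {t : 𝕜} (hs : IsRegularParam (s t))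
    (hderiv : HasDerivAt s (paramVelocity (s t)) t) :
    HasDerivAt (fun x => curveY (s x)) (curveSlope (s t)) t := by
  have ⟨h_zero, h_add_one, _, _, _, hden⟩ := hs
  refine ((hasDerivAt_curveY hden).comp t hderiv).congr_deriv ?_
  rw [paramVelocity, curveSlope]
  field_simp

theorem hasDerivAt_curveSlope_comp {s : 𝕜 → 𝕜} {t : 𝕜} (hs : IsRegularParam (s t))
    (hderiv : HasDerivAt s (paramVelocity (s t)) t) :
    HasDerivAt (fun x => curveSlope (s x)) (curveSecondDeriv (s t)) t := by
  have ⟨h_zero, h_add_one, _, _, _, hden⟩ := hs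
  refine ((hasDerivAt_curveSlope h_zero h_add_one hden).comp t hderiv).congr_deriv ?_
  rw [paramVelocity, curveSecondDeriv]
  field_simp
  ring

variable {U : Set 𝕜} {y : 𝕜 → 𝕜}

theorem hasDerivAt_curveParam (hU : IsOpen U) (hdiff : DifferentiableOn 𝕜 y U)
    (hcurve : ∀ t ∈ U, OnThetaCurve t (y t)) {t : 𝕜} (ht : t ∈ U) :
    HasDerivAt (fun x => curveParam x (y x)) (paramVelocity (curveParam t (y t))) t := by
  have hU_nhds := hU.mem_nhds ht
  have hy : DifferentiableAt 𝕜 y t := hdiff.differentiableAt hU_nhds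
  have hparam : DifferentiableAt 𝕜 (fun x => curveParam x (y x)) t :=
    (differentiableAt_id.fun_mul (hy.sub_const 1)).fun_div (differentiableAt_id.fun_sub hy)
      (hcurve t ht).t_sub_y_ne_zero
  have hregular := (hcurve t ht).isRegularParam
  refine hasDerivAt_of_quartic hparam hregular.ne_zero hregular.add_one_ne_zero ?_
  filter_upwards [hU_nhds] with x hx using (hcurve x hx).quartic_curveParam

theorem deriv_eq_curveSlope (hU : IsOpen U) (hdiff : DifferentiableOn 𝕜 y U)
    (hcurve : ∀ t ∈ U, OnThetaCurve t (y t)) {t : 𝕜} (ht : t ∈ U) :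
    deriv y t = curveSlope (curveParam t (y t)) := by
  have hy : (fun x => curveY (curveParam x (y x))) =ᶠ[𝓝 t] y := by
    filter_upwards [hU.mem_nhds ht] with x hx using (hcurve x hx).curveY_curveParam
  rw [← hy.deriv_eq]
  exact (hasDerivAt_curveY_comp (s := fun x => curveParam x (y x)) (hcurve t ht).isRegularParam
    (hasDerivAt_curveParam hU hdiff hcurve ht)).deriv

theorem hasDerivAt_deriv_of_onThetaCurve (hU : IsOpen U) (hdiff : DifferentiableOn 𝕜 y U)
    (hcurve : ∀ t ∈ U, OnThetaCurve t (y t)) {t : 𝕜} (ht : t ∈ U) :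
    HasDerivAt (deriv y) (curveSecondDeriv (curveParam t (y t))) t := by
  have hderiv : deriv y =ᶠ[𝓝 t] fun x => curveSlope (curveParam x (y x)) := by
    filter_upwards [hU.mem_nhds ht] with x hx using deriv_eq_curveSlope hU hdiff hcurve hx
  exact (hasDerivAt_curveSlope_comp (s := fun x => curveParam x (y x)) (hcurve t ht).isRegularParam
    (hasDerivAt_curveParam hU hdiff hcurve ht)).congr_of_eventuallyEq hderiv

end Derivatives

theorem stmt_2_general {𝕜 : Type*} [NontriviallyNormedField 𝕜] [CharZero 𝕜] (θ : 𝕜) {U : Set 𝕜}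
    (hU : IsOpen U) {y : 𝕜 → 𝕜} (hdiff : DifferentiableOn 𝕜 y U)
    (hcurve : ∀ t ∈ U, OnThetaCurve t (y t)) {t : 𝕜} (ht : t ∈ U) :
    HasDerivAt (deriv y)
      (painleveVI (1 / 8) (-(θ ^ 2) / 2) (θ ^ 2 / 2) ((1 - θ ^ 2) / 2) t (y t) (deriv y t)) t := by
  have hpoint := hcurve t ht
  have hidentity := painleveVI_curve hpoint.isRegularParam
  rw [hpoint.curveT_curveParam, hpoint.curveY_curveParam,
    ← deriv_eq_curveSlope hU hdiff hcurve ht] at hidentity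
  rw [hpoint.painleveVI_eq, hidentity]
  exact hasDerivAt_deriv_of_onThetaCurve hU hdiff hcurve ht

/-- A solution of the stated algebraic equation solves the sixth Painlevé equation
with the indicated θ-tuple. -/
theorem stmt_2 (θ : ℂ) (U : Set ℂ) (hUopen : IsOpen U)
    (hU : ∀ t ∈ U, t ≠ 0 ∧ t ≠ 1)
    (y : ℂ → ℂ)
    (hdiff : ∀ t ∈ U, DifferentiableAt ℂ y t ∧ DifferentiableAt ℂ (deriv y) t)
    (hreg : ∀ t ∈ U, y t ≠ 0 ∧ y t ≠ 1 ∧ y t ≠ t)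
    (halg : ∀ t ∈ U, t / (y t)^2 - (t-1) / (y t - 1)^2 + t*(t-1) / (y t - t)^2 = 0)
    (hnd : ∀ t ∈ U, -2*t / (y t)^3 + 2*(t-1) / (y t - 1)^3 - 2*t*(t-1) / (y t - t)^3 ≠ 0)
    :
    ∀ t ∈ U,
      deriv (deriv y) t =
        (1/2) * (1/(y t) + 1/(y t - 1) + 1/(y t - t)) * (deriv y t)^2
        - (1/t + 1/(t-1) + 1/(y t - t)) * (deriv y t)
        + (y t * (y t - 1) * (y t - t) / (t^2 * (t-1)^2)) *
          ((1/8 : ℂ) + (-(θ^2)/2) * t / (y t)^2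
            + (θ^2/2) * (t-1) / (y t - 1)^2
            + ((1-θ^2)/2) * t * (t-1) / (y t - t)^2) := by
  have hcurve : ∀ t ∈ U, OnThetaCurve t (y t) := fun t ht =>
    ⟨(hU t ht).1, (hU t ht).2, (hreg t ht).1, (hreg t ht).2.1, (hreg t ht).2.2, halg t ht⟩
  have hdiffOn : DifferentiableOn ℂ y U := fun t ht => (hdiff t ht).1.differentiableWithinAt
  exact fun t ht => (stmt_2_general θ hUopen hdiffOn hcurve ht).deriv
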